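/- Let B be a type, let e ∈ FreeMonoid (B × Bool) be an idempotent word (i.e., FreeGroup.mk e = 1 in FreeGroup B), and let r₁, r₂, …, r_m ∈ FreeMonoid (B × Bool). Then the congruence on FreeMonoid (B × Bool) generated by the Vagner congruence ν together with the pairs (e * r₁, 1), (r₂, 1), …, (r_m, 1) is equal to the congruence generated by ν together with the pairs (e, 1), (r₁, 1), (r₂, 1), …, (r_m, 1); i.e., the inverse monoid presentations Inv⟨B | e·r₁ = 1, r₂ = 1, …, r_m = 1⟩ and Inv⟨B | e = 1, r₁ = 1, …, r_m = 1⟩ define the same quotient. -/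

import Mathlib

/-- The formal inverse of a word over `B`: reverse the word and negate the `Bool` component
of each letter. -/
def wInv {B : Type*} (w : FreeMonoid (B × Bool)) : FreeMonoid (B × Bool) :=
  FreeMonoid.ofList (((FreeMonoid.toList w).map fun p => (p.1, !p.2)).reverse)

/-- The generating relation of the Vagner congruence: `w w⁻¹ w ~ w` and
`w w⁻¹ u u⁻¹ ~ u u⁻¹ w w⁻¹` for all words `u, w`. -/
def vagnerRel (B : Type*) : FreeMonoid (B × Bool) → FreeMonoid (B × Bool) → Prop :=
  fun x y =>
    (∃ w, x = w * wInv w * w ∧ y = w) ∨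
    (∃ u w, x = w * wInv w * (u * wInv u) ∧ y = u * wInv u * (w * wInv w))

/-!
In an inverse monoid, `a ≤ b` means that `a` is an idempotent times `b`. Deleting a cancelling pair
`x x⁻¹` from a word moves its value up in this order, so a word that reduces to the empty word has
value below `1`, that is, an idempotent value. An idempotent with a right inverse is `1`, so the
single relation `e r₁ = 1` already forces `e = 1` and `r₁ = 1`.
-/

theorem mul_eq_one_iff_of_isIdempotentElem {M : Type*} [Monoid M] {e r : M}
    (he : IsIdempotentElem e) : e * r = 1 ↔ e = 1 ∧ r = 1 := by
  refine ⟨fun h => ?_, fun ⟨he_one, hr_one⟩ => by rw [he_one, hr_one, one_mul]⟩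
  have he_one : e = 1 := by
    calc e = e * (e * r) := by rw [h, mul_one]
      _ = 1 := by rw [← mul_assoc, he, h]
  exact ⟨he_one, by rwa [he_one, one_mul] at h⟩

theorem con_mul_one_iff_of_mul_self {M : Type*} [Monoid M] (c : Con M) {e r : M}
    (he : c (e * e) e) : c (e * r) 1 ↔ c e 1 ∧ c r 1 := by
  have hidem : IsIdempotentElem (e : c.Quotient) := c.eq.mpr he
  simpa only [← Con.eq, Con.coe_mul, Con.coe_one] using
    mul_eq_one_iff_of_isIdempotentElem (r := (r : c.Quotient)) hidem

/-- An inverse monoid, presented equationally: an involutive anti-automorphism `⁻¹` for which every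
`a⁻¹` is a generalized inverse of `a` and the idempotents `a * a⁻¹` commute. -/
class InverseMonoid (M : Type*) extends Monoid M, InvolutiveInv M where
  protected mul_inv_rev (a b : M) : (a * b)⁻¹ = b⁻¹ * a⁻¹
  mul_inv_mul_self (a : M) : a * a⁻¹ * a = a
  commute_mul_inv (a b : M) : Commute (a * a⁻¹) (b * b⁻¹)

namespace InverseMonoid

variable {M : Type*} [InverseMonoid M] {a b c : M}

theorem isIdempotentElem_mul_inv (a : M) : IsIdempotentElem (a * a⁻¹) := by
  rw [IsIdempotentElem, ← mul_assoc, mul_inv_mul_self]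

theorem mul_inv_mul_mul_inv (a b : M) :
    a * a⁻¹ * (b * b⁻¹) = (a * a⁻¹ * b) * (a * a⁻¹ * b)⁻¹ := by
  calc a * a⁻¹ * (b * b⁻¹) = a * a⁻¹ * (a * a⁻¹) * (b * b⁻¹) := by
        rw [isIdempotentElem_mul_inv]
    _ = a * a⁻¹ * (b * b⁻¹ * (a * a⁻¹)) := by rw [mul_assoc, commute_mul_inv a b]
    _ = (a * a⁻¹ * b) * (a * a⁻¹ * b)⁻¹ := by
        simp only [InverseMonoid.mul_inv_rev, inv_inv, mul_assoc]

theorem mul_mul_inv_eq_mul_mul_inv_mul (a b : M) :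
    a * (b * b⁻¹) = (a * b) * (a * b)⁻¹ * a := by
  have h : a⁻¹ * a * (b * b⁻¹) = b * b⁻¹ * (a⁻¹ * a) := by
    simpa only [inv_inv] using (commute_mul_inv a⁻¹ b).eq
  calc a * (b * b⁻¹) = a * a⁻¹ * a * (b * b⁻¹) := by rw [mul_inv_mul_self]
    _ = a * (a⁻¹ * a * (b * b⁻¹)) := by simp only [mul_assoc]
    _ = a * (b * b⁻¹ * (a⁻¹ * a)) := by rw [h]
    _ = (a * b) * (a * b)⁻¹ * a := by simp only [InverseMonoid.mul_inv_rev, mul_assoc]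

/-- The natural partial order of an inverse monoid: `a` is an idempotent multiple of `b`. The
idempotents of an inverse monoid are exactly the elements `p * p⁻¹`. -/
def NaturalLE (a b : M) : Prop := ∃ p : M, a = p * p⁻¹ * b

namespace NaturalLE

theorem refl (a : M) : NaturalLE a a := ⟨a, (mul_inv_mul_self a).symm⟩

theorem trans : NaturalLE a b → NaturalLE b c → NaturalLE a c := by
  rintro ⟨p, rfl⟩ ⟨q, rfl⟩
  exact ⟨p * p⁻¹ * q, by rw [← mul_assoc, mul_inv_mul_mul_inv]⟩

theorem mul_left (h : NaturalLE a b) (c : M) : NaturalLE (c * a) (c * b) := by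
  obtain ⟨p, rfl⟩ := h
  exact ⟨c * p, by rw [← mul_assoc, mul_mul_inv_eq_mul_mul_inv_mul, mul_assoc _ c b]⟩

theorem mul_right (h : NaturalLE a b) (c : M) : NaturalLE (a * c) (b * c) := by
  obtain ⟨p, rfl⟩ := h
  exact ⟨p, mul_assoc _ _ _⟩

theorem isIdempotentElem (h : NaturalLE a 1) : IsIdempotentElem a := by
  obtain ⟨p, rfl⟩ := h
  simpa only [mul_one] using isIdempotentElem_mul_inv p

end NaturalLE

theorem mul_inv_naturalLE_one (a : M) : NaturalLE (a * a⁻¹) 1 := ⟨a, (mul_one _).symm⟩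

section Words

variable {B : Type*} (φ : FreeMonoid (B × Bool) →* M)
  (hφ : ∀ x b, φ (.of (x, !b)) = (φ (.of (x, b)))⁻¹)

include hφ

theorem naturalLE_of_red_step {v w : List (B × Bool)} (h : FreeGroup.Red.Step v w) :
    NaturalLE (φ (.ofList v)) (φ (.ofList w)) := by
  obtain @⟨s, t, x, b⟩ := h
  have hdel : NaturalLE (φ (.of (x, b)) * φ (.of (x, !b))) 1 := by
    rw [hφ]
    exact mul_inv_naturalLE_one _
  simpa only [FreeMonoid.ofList_append, FreeMonoid.ofList_cons, map_mul, mul_assoc, one_mul]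
    using (hdel.mul_right (φ (.ofList t))).mul_left (φ (.ofList s))

theorem naturalLE_of_red {v w : List (B × Bool)} (h : FreeGroup.Red v w) :
    NaturalLE (φ (.ofList v)) (φ (.ofList w)) := by
  induction h with
  | refl => exact .refl _
  | tail _ hstep ih => exact ih.trans (naturalLE_of_red_step φ hφ hstep)

theorem isIdempotentElem_map_of_mk_eq_one {e : FreeMonoid (B × Bool)}
    (he : FreeGroup.mk e.toList = 1) : IsIdempotentElem (φ e) := by
  have hred : FreeGroup.Red e.toList [] := by
    obtain ⟨v, hev, hv⟩ := FreeGroup.Red.exact.mp he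
    rwa [FreeGroup.Red.nil_iff.mp hv] at hev
  have hle : NaturalLE (φ e) 1 := by
    simpa only [FreeMonoid.ofList_toList, FreeMonoid.ofList_nil, map_one] using
      naturalLE_of_red φ hφ hred
  exact hle.isIdempotentElem

end Words

end InverseMonoid

section VagnerCongruence

variable {B : Type*}

theorem wInv_mul (v w : FreeMonoid (B × Bool)) : wInv (v * w) = wInv w * wInv v := by
  simp [wInv]

theorem wInv_wInv (w : FreeMonoid (B × Bool)) : wInv (wInv w) = w := by
  simp [wInv, Function.comp_def]

/-- The Vagner congruence `ν`, whose quotient is the free inverse monoid on `B`. -/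
def vagnerCon (B : Type*) : Con (FreeMonoid (B × Bool)) := conGen (vagnerRel B)

theorem vagnerCon_mul_wInv_mul_self (w : FreeMonoid (B × Bool)) :
    vagnerCon B (w * wInv w * w) w :=
  .of _ _ (.inl ⟨w, rfl, rfl⟩)

theorem vagnerCon_mul_wInv_comm (v w : FreeMonoid (B × Bool)) :
    vagnerCon B (v * wInv v * (w * wInv w)) (w * wInv w * (v * wInv v)) :=
  .of _ _ (.inr ⟨w, v, rfl, rfl⟩)

theorem vagnerCon_wInv {v w : FreeMonoid (B × Bool)} (h : vagnerCon B v w) :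
    vagnerCon B (wInv v) (wInv w) := by
  induction h with
  | of v w h =>
    rcases h with ⟨w, rfl, rfl⟩ | ⟨u, w, rfl, rfl⟩
    · simpa only [wInv_mul, wInv_wInv, mul_assoc] using vagnerCon_mul_wInv_mul_self (wInv w)
    · simpa only [wInv_mul, wInv_wInv] using vagnerCon_mul_wInv_comm u w
  | refl w => exact (vagnerCon B).refl _
  | symm _ ih => exact (vagnerCon B).symm ih
  | trans _ _ ih₁ ih₂ => exact (vagnerCon B).trans ih₁ ih₂
  | mul _ _ ih₁ ih₂ => simpa only [wInv_mul] using (vagnerCon B).mul ih₂ ih₁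

instance : InverseMonoid (vagnerCon B).Quotient where
  inv := Quotient.map wInv fun _ _ => vagnerCon_wInv
  inv_inv := by
    rintro ⟨w⟩
    exact congrArg (vagnerCon B).mk' (wInv_wInv w)
  mul_inv_rev := by
    rintro ⟨v⟩ ⟨w⟩
    exact congrArg (vagnerCon B).mk' (wInv_mul v w)
  mul_inv_mul_self := by
    rintro ⟨w⟩
    exact (vagnerCon B).eq.mpr (vagnerCon_mul_wInv_mul_self w)
  commute_mul_inv := by
    rintro ⟨v⟩ ⟨w⟩
    exact (vagnerCon B).eq.mpr (vagnerCon_mul_wInv_comm v w)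

theorem vagnerCon_mul_self_of_mk_eq_one {e : FreeMonoid (B × Bool)}
    (he : FreeGroup.mk e.toList = 1) : vagnerCon B (e * e) e :=
  (vagnerCon B).eq.mp <| InverseMonoid.isIdempotentElem_map_of_mk_eq_one (vagnerCon B).mk'
    (fun _ _ => rfl) he

end VagnerCongruence

theorem idempotent_relator_split_general {B ι : Type*} (e : FreeMonoid (B × Bool))
    (he : FreeGroup.mk (FreeMonoid.toList e) = 1) (i₀ : ι) (r : ι → FreeMonoid (B × Bool)) :
    conGen (fun x y => vagnerRel B x y ∨ (x = e * r i₀ ∧ y = 1) ∨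
        (∃ i, i ≠ i₀ ∧ x = r i ∧ y = 1)) =
      conGen (fun x y => vagnerRel B x y ∨ (x = e ∧ y = 1) ∨ (∃ i, x = r i ∧ y = 1)) := by
  refine eq_of_forall_ge_iff fun c => ?_
  have hsplit (hν : ∀ x y, vagnerRel B x y → c x y) :
      c (e * r i₀) 1 ↔ c e 1 ∧ c (r i₀) 1 :=
    con_mul_one_iff_of_mul_self c <| Con.conGen_le.mpr hν (vagnerCon_mul_self_of_mk_eq_one he)
  have hall : (∀ i, c (r i) 1) ↔ c (r i₀) 1 ∧ ∀ i, i ≠ i₀ → c (r i) 1 := by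
    grind
  have hleft : (∀ x y, vagnerRel B x y ∨ (x = e * r i₀ ∧ y = 1) ∨
        (∃ i, i ≠ i₀ ∧ x = r i ∧ y = 1) → c x y) ↔
      (∀ x y, vagnerRel B x y → c x y) ∧ c (e * r i₀) 1 ∧ ∀ i, i ≠ i₀ → c (r i) 1 := by
    grind
  have hright : (∀ x y, vagnerRel B x y ∨ (x = e ∧ y = 1) ∨ (∃ i, x = r i ∧ y = 1) → c x y) ↔
      (∀ x y, vagnerRel B x y → c x y) ∧ c e 1 ∧ ∀ i, c (r i) 1 := by
    grind
  rw [Con.conGen_le, Con.conGen_le]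
  exact hleft.trans <| (and_congr_right fun hν => by rw [hsplit hν, hall, and_assoc]).trans
    hright.symm

/-- If `e` is an idempotent word then the inverse monoid presentations
`Inv⟨B | e·r₁ = 1, r₂ = 1, …, r_m = 1⟩` and `Inv⟨B | e = 1, r₁ = 1, …, r_m = 1⟩`
determine the same congruence on the free monoid, hence the same quotient. -/
theorem idempotent_relator_split {B : Type*} (e : FreeMonoid (B × Bool))
    (he : FreeGroup.mk (FreeMonoid.toList e) = 1) {m : ℕ} (hm : 0 < m)
    (r : Fin m → FreeMonoid (B × Bool)) :
    conGen (fun x y => vagnerRel B x y ∨ (x = e * r ⟨0, hm⟩ ∧ y = 1) ∨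
        (∃ i : Fin m, i ≠ ⟨0, hm⟩ ∧ x = r i ∧ y = 1)) =
      conGen (fun x y => vagnerRel B x y ∨ (x = e ∧ y = 1) ∨
        (∃ i : Fin m, x = r i ∧ y = 1)) :=
  idempotent_relator_split_general e he ⟨0, hm⟩ r
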